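/- Let A_M(j) denote the number of functions g on {0,…,M−1} whose global orbit pattern is the sequence of j ones (i.e., g has exactly j fixed points and no periodic point of period greater than 1). Then for every integer k with 1 ≤ k ≤ N−1, A_N(k) = C(N, k) · Σ_{p=1}^{N−k} k^p · A_{N−k}(p). -/

import Mathlib

open scoped Classical

/-- Two points are in the same component of `X_N` under `f`:
`x ~ y` iff some forward iterate of `x` equals some forward iterate of `y`. -/
def sameComp {N : ℕ} (f : Fin N → Fin N) (x y : Fin N) : Prop :=
  ∃ k l : ℕ, f^[k] x = f^[l] y

/-- The order `ω(x, f)` of a point `x`: the length of the periodic cycle contained in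
the component of `x`, i.e. the least `p > 0` such that the orbit of `x` is eventually
`p`-periodic. -/
noncomputable def gopOrd {N : ℕ} (f : Fin N → Fin N) (x : Fin N) : ℕ :=
  sInf {p : ℕ | 0 < p ∧ ∃ K : ℕ, f^[K + p] x = f^[K] x}

/-- The global orbit pattern of `f`: the list of orders of the least elements of the
components of `X_N` under `f`, listed in increasing order of those least elements. -/
noncomputable def gop {N : ℕ} (f : Fin N → Fin N) : List ℕ :=
  ((Finset.univ.filter (fun x : Fin N => ∀ y : Fin N, sameComp f x y → x ≤ y)).sort (· ≤ ·)).map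
    (gopOrd f)

/-- `A_M(j)`: the number of functions on `{0,…,M−1}` whose global orbit pattern is the
sequence of `j` ones. -/
noncomputable def A (M j : ℕ) : ℕ :=
  Nat.card {g : Fin M → Fin M // gop g = List.replicate j 1}

/-!
A function has gop `[1, …, 1]` with `j` ones exactly when every orbit runs into a fixed point and
there are `j` fixed points: each component then contains exactly one fixed point, so the least
elements of the components are in bijection with the fixed points.

The recursion comes from deleting the fixed points. Let `S` be the set of the `k` fixed points of
such an `f`. On the complement of `S` follow `f` where it stays outside `S`, and stay put where `f`
leads into `S`. All orbits of the resulting `g` run into fixed points too, namely the points that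
`f` sends into `S`, and `f` is recovered from `g` and the map `h : Fix g → S` which `f` induces;
every pair `(g, h)` occurs. There are `C(N, k)` choices of `S`, and a `g` with `p` fixed points
admits `k ^ p` maps `h`; here `p ≥ 1` because the complement of `S` is nonempty.
-/

open Function

/-! ### Orbits running into a fixed point -/

section EventuallyFixed

variable {α β : Type*} {f : α → α} {x : α}

/-- The forward orbit of `x` under `f` runs into a fixed point of `f`. -/
def ReachesFixedPt (f : α → α) (x : α) : Prop :=
  ∃ n : ℕ, IsFixedPt f (f^[n] x)

/-- Every forward orbit of `f` runs into a fixed point. For a self-map of a finite type this says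
that all periodic points are fixed points. -/
def EventuallyFixed (f : α → α) : Prop :=
  ∀ x, ReachesFixedPt f x

/-- The type of self-maps of `α` all of whose forward orbits run into a fixed point. -/
abbrev EventuallyFixedMap (α : Type*) : Type _ :=
  {f : α → α // EventuallyFixed f}

lemma ReachesFixedPt.of_isFixedPt (hx : IsFixedPt f x) : ReachesFixedPt f x :=
  ⟨0, hx⟩

lemma ReachesFixedPt.of_iterate {n : ℕ} (hx : ReachesFixedPt f (f^[n] x)) :
    ReachesFixedPt f x := by
  obtain ⟨m, hm⟩ := hx
  exact ⟨m + n, by rwa [iterate_add_apply]⟩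

lemma ReachesFixedPt.of_apply (hx : ReachesFixedPt f (f x)) : ReachesFixedPt f x :=
  .of_iterate (n := 1) hx

lemma ReachesFixedPt.iterate (hx : ReachesFixedPt f x) (n : ℕ) : ReachesFixedPt f (f^[n] x) := by
  obtain ⟨m, hm⟩ := hx
  refine ⟨m, ?_⟩
  rw [← iterate_add_apply, add_comm, iterate_add_apply, hm.iterate n]
  exact hm

lemma EventuallyFixed.induction (hf : EventuallyFixed f) {motive : α → Prop}
    (isFixedPt : ∀ x, IsFixedPt f x → motive x)
    (of_apply : ∀ x, motive (f x) → motive x) (x : α) : motive x := by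
  obtain ⟨n, hn⟩ := hf x
  induction n generalizing x with
  | zero => exact isFixedPt x hn
  | succ n ih => exact of_apply x (ih (f x) hn)

lemma EventuallyFixed.nonempty_fixedPoints [Nonempty α] (hf : EventuallyFixed f) :
    (fixedPoints f).Nonempty :=
  let ⟨_, hn⟩ := hf (Classical.arbitrary α)
  ⟨_, hn⟩

lemma EventuallyFixed.semiconj {g : β → β} {φ : α → β} (hf : EventuallyFixed f)
    (hφ : Semiconj φ f g) (hsurj : Surjective φ) : EventuallyFixed g := by
  refine hsurj.forall.2 fun x => ?_
  obtain ⟨n, hn⟩ := hf x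
  exact ⟨n, (hφ.iterate_right n).eq x ▸ hn.map hφ⟩

lemma eventuallyFixed_conj_iff (e : α ≃ β) : EventuallyFixed (e.conj f) ↔ EventuallyFixed f := by
  refine ⟨fun h => ?_, fun h => h.semiconj (e.semiconj_conj f) e.surjective⟩
  have hsemi := e.symm.semiconj_conj (e.conj f)
  rw [← Equiv.conj_symm, Equiv.symm_apply_apply] at hsemi
  exact h.semiconj hsemi e.symm.surjective

lemma fixedPoints_conj (e : α ≃ β) (f : α → α) :
    fixedPoints (e.conj f) = e '' fixedPoints f := by
  ext y
  rw [e.image_eq_preimage_symm]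
  simp [IsFixedPt, ← Equiv.eq_symm_apply]

/-- Conjugation by `e`, as a bijection between the maps all of whose orbits run into a fixed
point. -/
def EventuallyFixedMap.congr (e : α ≃ β) : EventuallyFixedMap α ≃ EventuallyFixedMap β :=
  e.conj.subtypeEquiv fun _ => (eventuallyFixed_conj_iff e).symm

end EventuallyFixed

/-! ### Global orbit patterns consisting of ones -/

section GlobalOrbitPattern

variable {N : ℕ} {f : Fin N → Fin N} {x y z : Fin N}

lemma sameComp.symm (h : sameComp f x y) : sameComp f y x :=
  let ⟨a, b, hab⟩ := h
  ⟨b, a, hab.symm⟩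

lemma sameComp.trans (hxy : sameComp f x y) (hyz : sameComp f y z) : sameComp f x z := by
  obtain ⟨a, b, hab⟩ := hxy
  obtain ⟨c, d, hcd⟩ := hyz
  refine ⟨c + a, b + d, ?_⟩
  rw [iterate_add_apply, hab, ← iterate_add_apply, add_comm, iterate_add_apply, hcd,
    ← iterate_add_apply]

lemma sameComp_iterate (f : Fin N → Fin N) (x : Fin N) (n : ℕ) : sameComp f x (f^[n] x) :=
  ⟨n, 0, rfl⟩

lemma sameComp.eq_of_isFixedPt (h : sameComp f x y) (hx : IsFixedPt f x) (hy : IsFixedPt f y) :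
    x = y := by
  obtain ⟨a, b, hab⟩ := h
  rwa [hx.iterate a, hy.iterate b] at hab

lemma sameComp.reachesFixedPt (h : sameComp f x y) (hx : ReachesFixedPt f x) :
    ReachesFixedPt f y := by
  obtain ⟨a, b, hab⟩ := h
  exact .of_iterate (hab ▸ hx.iterate a)

/-- The least elements of the components of `f`, that is, the points which `gop f` lists. -/
noncomputable def compMins (f : Fin N → Fin N) : Finset (Fin N) :=
  Finset.univ.filter fun x => ∀ y, sameComp f x y → x ≤ y

lemma mem_compMins : x ∈ compMins f ↔ ∀ y, sameComp f x y → x ≤ y := by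
  simp [compMins]

lemma exists_mem_compMins_sameComp (f : Fin N → Fin N) (x : Fin N) :
    ∃ r ∈ compMins f, sameComp f r x := by
  obtain ⟨r, hxr, hmin⟩ := Set.exists_min_image {y | sameComp f x y} id (Set.toFinite _)
    ⟨x, sameComp_iterate f x 0⟩
  exact ⟨r, mem_compMins.2 fun y hry => hmin y (hxr.trans hry), hxr.symm⟩

lemma gopOrd_eq_one_iff : gopOrd f x = 1 ↔ ReachesFixedPt f x := by
  set periods : Set ℕ := {p | 0 < p ∧ ∃ K : ℕ, f^[K + p] x = f^[K] x} with hperiods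
  have one_mem : 1 ∈ periods ↔ ReachesFixedPt f x := by
    simp [hperiods, ReachesFixedPt, IsFixedPt, iterate_succ_apply']
  rw [← one_mem]
  constructor
  · intro h
    exact h ▸ Nat.sInf_mem (Nat.nonempty_of_sInf_eq_succ h)
  · intro h
    exact le_antisymm (Nat.sInf_le h) (Nat.sInf_mem ⟨1, h⟩).1

lemma forall_mem_compMins_gopOrd_eq_one_iff :
    (∀ r ∈ compMins f, gopOrd f r = 1) ↔ EventuallyFixed f := by
  simp only [gopOrd_eq_one_iff]
  refine ⟨fun h x => ?_, fun h r _ => h r⟩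
  obtain ⟨r, hr, hrx⟩ := exists_mem_compMins_sameComp f x
  exact hrx.reachesFixedPt (h r hr)

lemma EventuallyFixed.card_compMins (hf : EventuallyFixed f) :
    (compMins f).card = (fixedPoints f).ncard := by
  choose t ht using hf
  have sameComp_limit (x : Fin N) : sameComp f x (f^[t x] x) := sameComp_iterate f x (t x)
  rw [← Set.ncard_coe_finset]
  refine Set.ncard_congr (fun x _ => f^[t x] x) (fun x _ => ht x) ?injective ?surjective
  case injective =>
    intro x y hx hy hxy
    have hcomp : sameComp f x y := ⟨t x, t y, hxy⟩
    exact le_antisymm (mem_compMins.1 hx y hcomp) (mem_compMins.1 hy x hcomp.symm)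
  case surjective =>
    intro q hq
    obtain ⟨r, hr, hrq⟩ := exists_mem_compMins_sameComp f q
    exact ⟨r, hr, ((sameComp_limit r).symm.trans hrq).eq_of_isFixedPt (ht r) hq⟩

lemma gop_eq_replicate_one_iff {j : ℕ} :
    gop f = List.replicate j 1 ↔ EventuallyFixed f ∧ (fixedPoints f).ncard = j := by
  change ((compMins f).sort (· ≤ ·)).map (gopOrd f) = _ ↔ _
  rw [List.eq_replicate_iff, List.length_map, Finset.length_sort, List.forall_mem_map]
  simp only [Finset.mem_sort]
  rw [forall_mem_compMins_gopOrd_eq_one_iff, and_comm]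
  exact and_congr_right fun hf => by rw [hf.card_compMins]

lemma A_natCard_eq {β : Type*} [Finite β] (j : ℕ) :
    A (Nat.card β) j = Nat.card {g : EventuallyFixedMap β // (fixedPoints g.1).ncard = j} := by
  let e := (Finite.equivFin β).symm
  calc A (Nat.card β) j
    _ = Nat.card {g : Fin (Nat.card β) → Fin (Nat.card β) //
          EventuallyFixed g ∧ (fixedPoints g).ncard = j} :=
      Nat.card_congr (Equiv.subtypeEquivRight fun _ => gop_eq_replicate_one_iff)
    _ = Nat.card {g : EventuallyFixedMap (Fin (Nat.card β)) // (fixedPoints g.1).ncard = j} :=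
      Nat.card_congr (Equiv.subtypeSubtypeEquivSubtypeInter _ _).symm
    _ = Nat.card {g : EventuallyFixedMap β // (fixedPoints g.1).ncard = j} :=
      Nat.card_congr <| (EventuallyFixedMap.congr e).subtypeEquiv fun g => by
        rw [← Set.ncard_image_of_injective _ e.injective, ← fixedPoints_conj]
        rfl

end GlobalOrbitPattern

/-! ### Deleting the fixed points -/

section Glue

variable {σ β : Type*} {f : σ ⊕ β → σ ⊕ β} {g : β → β} {h : fixedPoints g → σ}

/-- The self-map of `σ ⊕ β` that fixes `σ` pointwise, sends the fixed points of `g` into `σ` by `h`,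
and follows `g` elsewhere on `β`. -/
noncomputable def glue (g : β → β) (h : fixedPoints g → σ) : σ ⊕ β → σ ⊕ β :=
  Sum.elim Sum.inl fun b => if hb : b ∈ fixedPoints g then Sum.inl (h ⟨b, hb⟩) else Sum.inr (g b)

/-- The self-map of `β` that follows `f` where `f` stays in `β` and is the identity where `f` leads
into `σ`. It recovers `g` from `glue g h`. -/
def unglue (f : σ ⊕ β → σ ⊕ β) (b : β) : β :=
  Sum.elim (fun _ => b) id (f (Sum.inr b))

lemma glue_inl (s : σ) : glue g h (Sum.inl s) = Sum.inl s :=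
  rfl

lemma glue_inr_of_isFixedPt {b : β} (hb : IsFixedPt g b) :
    glue g h (Sum.inr b) = Sum.inl (h ⟨b, hb⟩) :=
  dif_pos hb

lemma glue_inr_of_not_isFixedPt {b : β} (hb : ¬IsFixedPt g b) :
    glue g h (Sum.inr b) = Sum.inr (g b) :=
  dif_neg hb

lemma fixedPoints_glue (g : β → β) (h : fixedPoints g → σ) :
    fixedPoints (glue g h) = Set.range Sum.inl := by
  ext (s | b)
  · simp [IsFixedPt, glue_inl]
  · by_cases hb : IsFixedPt g b
    · simp [IsFixedPt, glue_inr_of_isFixedPt hb]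
    · simpa [IsFixedPt, glue_inr_of_not_isFixedPt hb] using hb

lemma eventuallyFixed_glue (hg : EventuallyFixed g) (h : fixedPoints g → σ) :
    EventuallyFixed (glue g h) := by
  have reaches_inl (s : σ) : ReachesFixedPt (glue g h) (Sum.inl s) :=
    .of_isFixedPt (glue_inl s)
  have reaches_inr_of_isFixedPt (b : β) (hb : IsFixedPt g b) :
      ReachesFixedPt (glue g h) (Sum.inr b) :=
    .of_apply (glue_inr_of_isFixedPt hb ▸ reaches_inl _)
  rintro (s | b)
  · exact reaches_inl s
  · induction b using hg.induction with
    | isFixedPt b hb => exact reaches_inr_of_isFixedPt b hb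
    | of_apply b ih =>
      by_cases hb : IsFixedPt g b
      · exact reaches_inr_of_isFixedPt b hb
      · exact .of_apply (glue_inr_of_not_isFixedPt hb ▸ ih)

lemma unglue_of_inr_eq_inl {b : β} {s : σ} (hb : f (Sum.inr b) = Sum.inl s) : unglue f b = b := by
  simp [unglue, hb]

lemma unglue_of_inr_eq_inr {b b' : β} (hb : f (Sum.inr b) = Sum.inr b') : unglue f b = b' := by
  simp [unglue, hb]

lemma unglue_glue (g : β → β) (h : fixedPoints g → σ) : unglue (glue g h) = g := by
  funext b
  by_cases hb : IsFixedPt g b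
  · rw [unglue_of_inr_eq_inl (glue_inr_of_isFixedPt hb), hb]
  · rw [unglue_of_inr_eq_inr (glue_inr_of_not_isFixedPt hb)]

lemma eventuallyFixed_unglue (hf : EventuallyFixed f) (hfix : fixedPoints f ⊆ Set.range Sum.inl) :
    EventuallyFixed (unglue f) := by
  suffices reaches : ∀ (x : σ ⊕ β) (b : β), x = Sum.inr b → ReachesFixedPt (unglue f) b from
    fun b => reaches _ b rfl
  intro x
  induction x using hf.induction with
  | isFixedPt x hx =>
    rintro b rfl
    simpa using hfix hx
  | of_apply x ih =>
    rintro b rfl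
    cases hb : f (Sum.inr b) with
    | inl s => exact .of_isFixedPt (unglue_of_inr_eq_inl hb)
    | inr b' => exact .of_apply (unglue_of_inr_eq_inr hb ▸ ih b' hb)

lemma exists_inr_eq_inl_of_isFixedPt_unglue (hfix : fixedPoints f ⊆ Set.range Sum.inl) {b : β}
    (hb : IsFixedPt (unglue f) b) : ∃ s, f (Sum.inr b) = Sum.inl s := by
  cases hfb : f (Sum.inr b) with
  | inl s => exact ⟨s, rfl⟩
  | inr b' =>
    obtain rfl : b' = b := (unglue_of_inr_eq_inr hfb).symm.trans hb
    simpa using hfix hfb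

lemma exists_glue_unglue (hfix : fixedPoints f = Set.range Sum.inl) :
    ∃ h, glue (unglue f) h = f := by
  choose h hh using fun b : fixedPoints (unglue f) =>
    exists_inr_eq_inl_of_isFixedPt_unglue hfix.subset b.2
  refine ⟨h, funext ?_⟩
  rintro (s | b)
  · exact (hfix.superset ⟨s, rfl⟩ : IsFixedPt f _).symm
  · by_cases hb : IsFixedPt (unglue f) b
    · rw [glue_inr_of_isFixedPt hb, hh ⟨b, hb⟩]
    · rw [glue_inr_of_not_isFixedPt hb]
      cases hfb : f (Sum.inr b) with
      | inl s => exact absurd (unglue_of_inr_eq_inl hfb) hb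
      | inr b' => rw [unglue_of_inr_eq_inr hfb]

lemma glue_right_injective (g : β → β) :
    Injective (glue g : (fixedPoints g → σ) → σ ⊕ β → σ ⊕ β) := by
  intro h h' heq
  ext ⟨b, hb⟩
  simpa [glue_inr_of_isFixedPt hb] using congrFun heq (Sum.inr b)

/-- Gluing as a bijection: a map on `σ ⊕ β` whose orbits run into its fixed-point set `σ` amounts
to a map `g` on `β` whose orbits run into fixed points and a map `Fix g → σ`. -/
noncomputable def glueEquiv (σ β : Type*) :
    (Σ g : EventuallyFixedMap β, fixedPoints g.1 → σ) ≃
      {f : EventuallyFixedMap (σ ⊕ β) // fixedPoints f.1 = Set.range Sum.inl} :=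
  Equiv.ofBijective
    (fun p => ⟨⟨glue p.1.1 p.2, eventuallyFixed_glue p.1.2 p.2⟩, fixedPoints_glue p.1.1 p.2⟩) <| by
    constructor
    · rintro ⟨⟨g, hg⟩, h⟩ ⟨⟨g', hg'⟩, h'⟩ heq
      have hglue : glue g h = glue g' h' := congrArg (fun f => f.1.1) heq
      obtain rfl : g = g' := by rw [← unglue_glue g h, hglue, unglue_glue]
      obtain rfl : h = h' := glue_right_injective g hglue
      rfl
    · rintro ⟨⟨f, hf⟩, hfix⟩
      obtain ⟨h, hglue⟩ := exists_glue_unglue hfix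
      exact ⟨⟨⟨unglue f, eventuallyFixed_unglue hf hfix.subset⟩, h⟩,
        Subtype.ext (Subtype.ext hglue)⟩

end Glue

/-! ### Counting -/

lemma card_subtype_ncard_eq (α : Type*) [Finite α] (k : ℕ) :
    Nat.card {S : Set α // S.ncard = k} = (Nat.card α).choose k := by
  have := Fintype.ofFinite α
  rw [← Set.powersetCard.card]
  exact (Nat.card_congr (Fintype.finsetEquivSet.subtypeEquiv fun S => by
    simp [Set.powersetCard.mem_iff])).symm

lemma card_sigma_fixedPoints_arrow (σ β : Type*) [Finite σ] [Finite β] [Nonempty β] :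
    Nat.card (Σ g : EventuallyFixedMap β, fixedPoints g.1 → σ) =
      ∑ p ∈ Finset.Icc 1 (Nat.card β), Nat.card σ ^ p * A (Nat.card β) p := by
  have := Fintype.ofFinite (EventuallyFixedMap β)
  have ncard_mem (g : EventuallyFixedMap β) :
      (fixedPoints g.1).ncard ∈ Finset.Icc 1 (Nat.card β) :=
    Finset.mem_Icc.2 ⟨g.2.nonempty_fixedPoints.ncard_pos, Set.ncard_le_card _⟩
  calc Nat.card (Σ g : EventuallyFixedMap β, fixedPoints g.1 → σ)
    _ = ∑ g : EventuallyFixedMap β, Nat.card σ ^ (fixedPoints g.1).ncard := by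
      simp only [Nat.card_sigma, Nat.card_fun, Nat.card_coe_set_eq]
    _ = ∑ p ∈ Finset.Icc 1 (Nat.card β), ∑ g : EventuallyFixedMap β with
          (fixedPoints g.1).ncard = p, Nat.card σ ^ p :=
      (Finset.sum_fiberwise_of_maps_to' (fun g _ => ncard_mem g) _).symm
    _ = ∑ p ∈ Finset.Icc 1 (Nat.card β), Nat.card σ ^ p * A (Nat.card β) p := by
      refine Finset.sum_congr rfl fun p _ => ?_
      rw [Finset.sum_const, smul_eq_mul, mul_comm, A_natCard_eq,
        Nat.card_eq_fintype_card (α := {g : EventuallyFixedMap β // _}), Fintype.card_subtype]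

lemma card_fixedPoints_eq {α : Type*} [Finite α] {S : Set α} (hS : Sᶜ.Nonempty) :
    Nat.card {f : EventuallyFixedMap α // fixedPoints f.1 = S} =
      ∑ p ∈ Finset.Icc 1 Sᶜ.ncard, S.ncard ^ p * A Sᶜ.ncard p := by
  have : Nonempty ↥Sᶜ := hS.to_subtype
  let e : S ⊕ ↥Sᶜ ≃ α := Equiv.Set.sumCompl S
  have image_inl : e '' Set.range Sum.inl = S := by
    rw [← Set.range_comp]
    exact Subtype.range_coe
  simp only [← Nat.card_coe_set_eq]
  rw [← card_sigma_fixedPoints_arrow, Nat.card_congr (glueEquiv S ↥Sᶜ)]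
  refine (Nat.card_congr ((EventuallyFixedMap.congr e).subtypeEquiv fun f => ?_)).symm
  rw [← e.injective.image_injective.eq_iff, ← fixedPoints_conj, image_inl]
  rfl

/-- for `1 ≤ k ≤ N−1`,
`A_N(k) = C(N, k) · Σ_{p=1}^{N−k} k^p · A_{N−k}(p)`. -/
theorem A_recursion (N k : ℕ) (hk : 1 ≤ k) (hkN : k ≤ N - 1) :
    A N k = N.choose k * ∑ p ∈ Finset.Icc 1 (N - k), k ^ p * A (N - k) p := by
  have card_fiber (S : {S : Set (Fin N) // S.ncard = k}) :
      Nat.card {f : EventuallyFixedMap (Fin N) // fixedPoints f.1 = S} =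
        ∑ p ∈ Finset.Icc 1 (N - k), k ^ p * A (N - k) p := by
    have ncard_compl : S.1ᶜ.ncard = N - k := by rw [Set.ncard_compl, S.2, Nat.card_fin]
    rw [card_fixedPoints_eq (Set.nonempty_of_ncard_ne_zero (by omega)), ncard_compl, S.2]
  calc A N k
    _ = Nat.card {f : EventuallyFixedMap (Fin N) // (fixedPoints f.1).ncard = k} := by
      rw [← A_natCard_eq, Nat.card_fin]
    _ = Nat.card (Σ S : {S : Set (Fin N) // S.ncard = k},
          {f : EventuallyFixedMap (Fin N) // fixedPoints f.1 = S}) :=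
      Nat.card_congr (Equiv.sigmaSubtypeFiberEquivSubtype
        (fun f : EventuallyFixedMap (Fin N) => fixedPoints f.1) (q := fun S => S.ncard = k)
        fun _ => Iff.rfl).symm
    _ = N.choose k * ∑ p ∈ Finset.Icc 1 (N - k), k ^ p * A (N - k) p := by
      rw [Nat.card_sigma, Finset.sum_congr rfl fun S _ => card_fiber S, Finset.sum_const,
        smul_eq_mul, Finset.card_univ, ← Nat.card_eq_fintype_card, card_subtype_ncard_eq,
        Nat.card_fin]
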